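/- Let m ≥ 2 be an integer and let f ∈ ℤ[X] be irreducible in ℤ[X] of degree m whose constant coefficient equals m! or −m!. Then for every positive integer n, f(X^n) is irreducible in ℤ[X]. -/

import Mathlib

open Polynomial

noncomputable def powRes {R : Type*} [CommRing R] (p d : ℕ) (g : R[X]) : R[X] :=
  resultant (g.map C) (X ^ p - C X : R[X][X]) d p

lemma powRes_map {R S : Type*} [CommRing R] [CommRing S] (φ : R →+* S) (p d : ℕ) (g : R[X]) :
    powRes p d (g.map φ) = (powRes p d g).map φ := by
  unfold powRes
  have h := resultant_map_map (g.map C) (X ^ p - C X : R[X][X]) d p (mapRingHom φ)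
  rw [coe_mapRingHom] at h
  rw [← h]
  congr 1
  · rw [map_map, map_map]
    congr 1
    ext x
    simp
  · simp

lemma powRes_coeff_zero {R : Type*} [CommRing R] (p d : ℕ) (g : R[X]) (hp : p ≠ 0)
    (hd : g.natDegree ≤ d) :
    (powRes p d g).coeff 0 = (-1) ^ (d * p) * g.coeff 0 ^ p := by
  unfold powRes
  have h := resultant_map_map (g.map C) (X ^ p - C X : R[X][X]) d p (evalRingHom (0 : R))
  rw [coeff_zero_eq_eval_zero, ← coe_evalRingHom, ← h, ← resultant_X_pow_right _ _ _ hd]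
  congr 1
  · rw [map_map]
    have : (evalRingHom (0 : R)).comp C = RingHom.id R := by ext x; simp
    rw [this, map_id]
  · simp

lemma powRes_prod {L : Type*} [Field L] [IsAlgClosed L] (p : ℕ) (hp : p ≠ 0) (g : L[X]) :
    powRes p g.natDegree g =
      C g.leadingCoeff ^ p * (g.roots.map (fun b => C (b ^ p) - X)).prod := by
  unfold powRes
  have hs : g.Splits := IsAlgClosed.splits g
  have h := resultant_eq_prod_eval (g.map C) (X ^ p - C X : L[X][X]) p
    (by
      have := natDegree_X_pow_sub_C (R := L[X]) (n := p) (r := X)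
      exact this.le) (hs.map C)
  rw [natDegree_map_eq_of_injective C_injective, leadingCoeff_map_of_injective C_injective,
    hs.roots_map_of_injective C_injective] at h
  rw [h, Multiset.map_map]
  congr 2
  apply Multiset.map_congr rfl
  intro x _
  simp

lemma powRes_root {E : Type*} [Field E] (p : ℕ) (hp : p ≠ 0) (g : ℤ[X])
    (b : E) (hb : aeval b g = 0) : aeval (b ^ p) (powRes p g.natDegree g) = 0 := by
  obtain ⟨u, v, -, -, h⟩ := exists_mul_add_mul_eq_C_resultant (m := g.natDegree) (n := p)
    (g.map C) (X ^ p - C X : ℤ[X][X]) (natDegree_map_le)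
    (by
      have := natDegree_X_pow_sub_C (R := ℤ[X]) (n := p) (r := X)
      exact this.le) (Or.inr hp)
  have h2 := congrArg (eval₂ (aeval (R := ℤ) (b ^ p) : ℤ[X] →ₐ[ℤ] E).toRingHom b) h
  rw [eval₂_C, eval₂_add, eval₂_mul, eval₂_mul, eval₂_map] at h2
  have h3 : ((aeval (R := ℤ) (b ^ p) : ℤ[X] →ₐ[ℤ] E).toRingHom).comp C = algebraMap ℤ E := RingHom.ext_int _ _
  rw [h3, ← aeval_def, hb] at h2
  simp at h2
  exact h2.symm

lemma powRes_natDegree (p : ℕ) (hp : p ≠ 0) (g : ℤ[X]) :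
    (powRes p g.natDegree g).natDegree ≤ g.natDegree := by
  let φ : ℤ →+* AlgebraicClosure ℚ := algebraMap ℤ _
  have hφ : Function.Injective φ := FaithfulSMul.algebraMap_injective _ _
  rw [← natDegree_map_eq_of_injective hφ, ← powRes_map, ← natDegree_map_eq_of_injective hφ g,
    powRes_prod p hp, ← C_pow]
  refine (natDegree_C_mul_le _ _).trans ?_
  refine (natDegree_multiset_prod_le _).trans ?_
  rw [Multiset.map_map]
  refine (Multiset.sum_le_card_nsmul _ 1 ?_).trans ?_
  · intro x hx
    rw [Multiset.mem_map] at hx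
    obtain ⟨b, -, rfl⟩ := hx
    simp only [Function.comp]
    compute_degree
  · simpa using card_roots' _

lemma powRes_mod_ne (p : ℕ) (hp : p ≠ 0) (q : ℕ) [Fact q.Prime] (g : ℤ[X])
    (hg : g.map (Int.castRingHom (ZMod q)) ≠ 0) :
    (powRes p g.natDegree g).map (Int.castRingHom (ZMod q)) ≠ 0 := by
  set ψ := (algebraMap (ZMod q) (AlgebraicClosure (ZMod q))).comp (Int.castRingHom (ZMod q)) with hψ
  have hi : Function.Injective (algebraMap (ZMod q) (AlgebraicClosure (ZMod q))) :=
    FaithfulSMul.algebraMap_injective _ _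
  intro h0
  have h1 : (powRes p g.natDegree g).map ψ = 0 := by
    rw [hψ, ← map_map, h0, Polynomial.map_zero]
  have hg1 : g.map ψ ≠ 0 := by
    rw [hψ, ← map_map]
    exact (Polynomial.map_ne_zero_iff hi).2 hg
  rw [← powRes_map] at h1
  obtain ⟨k, hk⟩ := Nat.exists_eq_add_of_le (natDegree_map_le (f := ψ) (p := g))
  rw [hk] at h1
  have h2 := powRes_prod p hp (g.map ψ)
  unfold powRes at h1 h2
  rw [resultant_add_left_deg _ _ _ _ _ natDegree_map_le, h2] at h1
  have h3 : (X ^ p - C X : (AlgebraicClosure (ZMod q))[X][X]).coeff p = 1 := by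
    simp [coeff_C, hp]
  rw [h3] at h1
  simp only [one_pow, mul_one] at h1
  refine mul_ne_zero (pow_ne_zero _ (by simp)) (mul_ne_zero (pow_ne_zero _ ?_) ?_) h1
  · simpa using hg1
  · apply Multiset.prod_ne_zero
    intro hx
    rw [Multiset.mem_map] at hx
    obtain ⟨b, -, hb⟩ := hx
    have := congrArg (fun t => coeff t 1) hb
    simp only [coeff_sub, coeff_X_one, coeff_C_succ, coeff_zero] at this
    simp at this

lemma key_no_root {E : Type} [Field E] [Algebra ℚ E] (f : ℤ[X]) (hf : Irreducible f)
    (hd : f.natDegree ≠ 0) (q : ℕ) (hq : q.Prime) (h1 : (q : ℤ) ∣ f.coeff 0)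
    (h2 : ¬ (q : ℤ) ^ 2 ∣ f.coeff 0) (p : ℕ) (hp : p.Prime) (b : E)
    (hb : aeval (b ^ p) f = 0) (g : ℤ[X]) (hgp : g.IsPrimitive) (hgd : g.natDegree ≤ f.natDegree)
    (hgb : aeval b g = 0) : False := by
  haveI := Fact.mk hq
  have hprim : f.IsPrimitive := hf.isPrimitive hd
  have hgq : g.map (Int.castRingHom (ZMod q)) ≠ 0 := by
    intro h
    have : C (q : ℤ) ∣ g := by
      rw [C_dvd_iff_dvd_coeff]
      intro i
      have := congrArg (fun t => coeff t i) h
      simpa [ZMod.intCast_zmod_eq_zero_iff_dvd] using this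
    have := hgp _ this
    exact (Nat.prime_iff_prime_int.1 hq).not_isUnit this
  have hF := powRes_mod_ne p hp.ne_zero q g hgq
  have hFd := (powRes_natDegree p hp.ne_zero g).trans hgd
  have hF0 := powRes_coeff_zero p g.natDegree g hp.ne_zero le_rfl
  have hFr := powRes_root p hp.ne_zero g b hgb
  set F := powRes p g.natDegree g with hFdef
  have hFne : F ≠ 0 := by rintro h; rw [h] at hF; simp at hF
  have hfQ : Irreducible (f.map (Int.castRingHom ℚ)) :=
    (IsPrimitive.Int.irreducible_iff_irreducible_map_cast hprim).1 hf
  have hdvd : f ∣ F := by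
    rw [IsPrimitive.Int.dvd_iff_map_cast_dvd_map_cast _ _ hprim]
    have e1 : ∀ r : ℤ[X], aeval (b ^ p) (r.map (Int.castRingHom ℚ)) = aeval (b ^ p) r := by
      intro r
      exact aeval_map_algebraMap ℚ (b ^ p) r
    have := minpoly.eq_of_irreducible hfQ (x := b ^ p) (by rw [e1, hb])
    have h3 := minpoly.dvd ℚ (b ^ p) (p := F.map (Int.castRingHom ℚ)) (by rw [e1, hFr])
    rw [← this] at h3
    exact (dvd_mul_right _ _).trans h3
  obtain ⟨c, hc⟩ := hdvd
  have hcne : c ≠ 0 := by rintro rfl; simp at hc; exact hFne hc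
  have hcd : c.natDegree = 0 := by
    rw [hc, natDegree_mul hf.ne_zero hcne] at hFd
    omega
  obtain ⟨k, rfl⟩ := natDegree_eq_zero.1 hcd
  have hkq : ¬ (q : ℤ) ∣ k := by
    rintro ⟨l, rfl⟩
    apply hF
    rw [hc]
    simp
  have hc0 : F.coeff 0 = f.coeff 0 * k := by rw [hc, coeff_mul_C]
  have hqp := Nat.prime_iff_prime_int.1 hq
  have hqg : (q : ℤ) ∣ g.coeff 0 := by
    have : (q : ℤ) ∣ (-1) ^ (g.natDegree * p) * g.coeff 0 ^ p := by
      rw [← hF0, hc0]; exact h1.mul_right _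
    rcases hqp.dvd_or_dvd this with h | h
    · exact absurd (isUnit_of_dvd_unit h (IsUnit.pow _ (by simp))) hqp.not_isUnit
    · exact hqp.dvd_of_dvd_pow h
  have hq2 : (q : ℤ) ^ 2 ∣ f.coeff 0 * k := by
    rw [← hc0, hF0]
    exact ((pow_dvd_pow _ hp.two_le).trans (pow_dvd_pow_of_dvd hqg p)).mul_left _
  exact h2 (((hqp.coprime_iff_not_dvd.2 hkq).pow_left).dvd_of_dvd_mul_right hq2)

lemma exists_int_poly {E : Type} [Field E] [Algebra ℚ E] (b : E) (hb : IsIntegral ℚ b) :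
    ∃ g : ℤ[X], g.IsPrimitive ∧ g.natDegree = (minpoly ℚ b).natDegree ∧ aeval b g = 0 := by
  set P := minpoly ℚ b
  have hP : P ≠ 0 := minpoly.ne_zero hb
  obtain ⟨⟨r, hr⟩, h⟩ := IsLocalization.integerNormalization_map_to_map (nonZeroDivisors ℤ) P
  set G := IsLocalization.integerNormalization (nonZeroDivisors ℤ) P
  have hr0 : (r : ℚ) ≠ 0 := by simpa using hr
  have hG : G.map (algebraMap ℤ ℚ) = C (r : ℚ) * P := by
    rw [h]; ext i; simp [Submonoid.smul_def]
  have hi : Function.Injective (algebraMap ℤ ℚ) := FaithfulSMul.algebraMap_injective _ _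
  have hG0 : G ≠ 0 := by
    intro h0
    rw [h0, Polynomial.map_zero] at hG
    exact mul_ne_zero (C_ne_zero.2 hr0) hP hG.symm
  refine ⟨G.primPart, G.isPrimitive_primPart, ?_, ?_⟩
  · rw [natDegree_primPart, ← natDegree_map_eq_of_injective hi, hG, natDegree_C_mul hr0]
  · have : aeval b G = 0 := by
      rw [← aeval_map_algebraMap ℚ, hG]; simp [P]
    have hch : CharZero E := algebraRat.charZero E
    rw [G.eq_C_content_mul_primPart, map_mul, aeval_C] at this
    refine (mul_eq_zero.1 this).resolve_left ?_
    simpa [content_eq_zero_iff] using hG0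

lemma adjoin_aux {K E : Type*} [Field K] [Field E] [Algebra K E] (x : E) (hx : IsIntegral K x)
    (b : IntermediateField.adjoin K {x}) :
    IsIntegral K b ∧ (minpoly K b).natDegree ≤ (minpoly K x).natDegree := by
  have := IntermediateField.adjoin.finiteDimensional hx
  refine ⟨IsIntegral.of_finite K b, ?_⟩
  rw [← IntermediateField.adjoin.finrank hx]
  exact minpoly.natDegree_le b

lemma gen_aux {K E : Type*} [Field K] [Field E] [Algebra K E] (x : E) (f : ℤ[X])
    (hf : aeval x f = 0) : aeval (IntermediateField.AdjoinSimple.gen K x) f = 0 := by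
  apply (algebraMap (IntermediateField.adjoin K {x}) E).injective
  rw [← aeval_algebraMap_apply, IntermediateField.AdjoinSimple.algebraMap_gen, hf, map_zero]

lemma irred_prime_step (f : ℤ[X]) (hf : Irreducible f)
    (hd : f.natDegree ≠ 0) (q : ℕ) (hq : q.Prime) (h1 : (q : ℤ) ∣ f.coeff 0)
    (h2 : ¬ (q : ℤ) ^ 2 ∣ f.coeff 0) (p : ℕ) (hp : p.Prime) :
    Irreducible (f.comp (X ^ p)) := by
  have hprim : f.IsPrimitive := hf.isPrimitive hd
  have hfQ : Irreducible (f.map (Int.castRingHom ℚ)) :=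
    (IsPrimitive.Int.irreducible_iff_irreducible_map_cast hprim).1 hf
  have hprim' : (f.comp (X ^ p)).IsPrimitive := by
    intro r hr
    apply hprim
    rw [C_dvd_iff_dvd_coeff] at hr ⊢
    intro i
    have := hr (i * p)
    rwa [← expand_eq_comp_X_pow, coeff_expand_mul hp.pos] at this
  rw [IsPrimitive.Int.irreducible_iff_irreducible_map_cast hprim']
  set fQ := f.map (Int.castRingHom ℚ) with hfQdef
  set a := fQ.leadingCoeff with ha
  have ha0 : a ≠ 0 := leadingCoeff_ne_zero.2 hfQ.ne_zero
  have hu : IsUnit (C a⁻¹ : ℚ[X]) := by simpa using ha0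
  have hmon : (fQ * C a⁻¹).Monic := monic_mul_leadingCoeff_inv hfQ.ne_zero
  have hirr : Irreducible (fQ * C a⁻¹) := by
    rwa [irreducible_mul_isUnit hu]
  have key : Irreducible ((fQ * C a⁻¹).comp (X ^ p)) := by
    refine irreducible_comp hmon (monic_X_pow p) hirr ?_
    intro E _ _ x hx
    rw [Polynomial.map_pow, map_X]
    apply X_pow_sub_C_irreducible_of_prime hp
    intro b hb
    have hxint : IsIntegral ℚ x := by
      by_contra h
      rw [minpoly.eq_zero h] at hx
      exact hirr.ne_zero hx.symm
    obtain ⟨hbint, hbdeg⟩ := @adjoin_aux ℚ E _ _ _ x hxint b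
    obtain ⟨g, hg1, hg2, hg3⟩ := @exists_int_poly _ _ (IntermediateField.algebra' _) b hbint
    refine @key_no_root _ _ (IntermediateField.algebra' _) f hf hd q hq h1 h2 p hp b ?_ g hg1 ?_ hg3
    · rw [hb]
      apply gen_aux
      have h := minpoly.aeval ℚ x
      rw [hx, map_mul, aeval_C] at h
      have h' := (mul_eq_zero.1 h).resolve_right ((_root_.map_ne_zero _).2 (inv_ne_zero ha0))
      rwa [hfQdef, show Int.castRingHom ℚ = algebraMap ℤ ℚ from rfl,
        aeval_map_algebraMap] at h'
    · rw [hg2]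
      refine hbdeg.trans ?_
      rw [hx, natDegree_mul_C (inv_ne_zero ha0)]
      exact natDegree_map_le
  rw [mul_comp, C_comp, irreducible_mul_isUnit hu] at key
  simpa [hfQdef, map_comp] using key

lemma irred_all (q : ℕ) (hq : q.Prime) (n : ℕ) (hn : n ≠ 0) : ∀ f : ℤ[X], Irreducible f →
    f.natDegree ≠ 0 → (q : ℤ) ∣ f.coeff 0 → ¬ (q : ℤ) ^ 2 ∣ f.coeff 0 →
    Irreducible (f.comp (X ^ n)) := by
  induction n using induction_on_primes with
  | zero => exact absurd rfl hn
  | one => intro f hf _ _ _; simpa using hf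
  | prime_mul p n hp ih =>
    intro f hf hd h1 h2
    have hn0 : n ≠ 0 := by rintro rfl; simp at hn
    have e : (f.comp (X ^ p)).coeff 0 = f.coeff 0 := by
      rw [coeff_zero_eq_eval_zero, coeff_zero_eq_eval_zero]
      simp [hp.ne_zero]
    have := ih hn0 (f.comp (X ^ p)) (irred_prime_step f hf hd q hq h1 h2 p hp)
      (by rw [natDegree_comp]; simp [hd, hp.ne_zero]) (by rwa [e]) (by rwa [e])
    rw [comp_assoc] at this
    simpa [← pow_mul, mul_comm] using this

lemma exists_prime_once (m : ℕ) (hm : 2 ≤ m) :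
    ∃ q : ℕ, q.Prime ∧ q ∣ m.factorial ∧ ¬ q ^ 2 ∣ m.factorial := by
  obtain ⟨q, hq, hlt, hle⟩ := Nat.exists_prime_lt_and_le_two_mul (m / 2) (by omega)
  have hqm : q ≤ m := by omega
  refine ⟨q, hq, (hq.dvd_factorial).2 hqm, ?_⟩
  intro h
  have hm2 : m < 2 * q := by omega
  obtain ⟨k, hk⟩ := Nat.exists_eq_add_of_le hqm
  have e := Nat.factorial_mul_ascFactorial q k
  rw [← hk] at e
  rw [← e, ← Nat.mul_factorial_pred hq.ne_zero, pow_two, mul_assoc] at h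
  have h := Nat.dvd_of_mul_dvd_mul_left hq.pos h
  rcases hq.dvd_mul.1 h with h | h
  · have := (hq.dvd_factorial).1 h
    have := hq.two_le
    omega
  · rw [Nat.ascFactorial_eq_prod_range, hq.prime.dvd_finsetProd_iff] at h
    obtain ⟨i, hi, h⟩ := h
    rw [Finset.mem_range] at hi
    have h' : q ∣ i + 1 := by
      have : q + 1 + i = q + (i + 1) := by ring
      rw [this] at h
      exact (Nat.dvd_add_right (dvd_refl q)).1 h
    have := Nat.le_of_dvd (by omega) h'
    omega

theorem stmt19 (m : ℕ) (hm : 2 ≤ m) (f : Polynomial ℤ) (hf : Irreducible f)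
    (hdeg : f.natDegree = m)
    (hconst : f.coeff 0 = (m.factorial : ℤ) ∨ f.coeff 0 = -(m.factorial : ℤ))
    (n : ℕ) (hn : 0 < n) :
    Irreducible (f.comp (X ^ n)) := by
  obtain ⟨q, hq, h1, h2⟩ := exists_prime_once m hm
  have h1' : (q : ℤ) ∣ (m.factorial : ℤ) := by exact_mod_cast h1
  have h2' : ¬ (q : ℤ) ^ 2 ∣ (m.factorial : ℤ) := by exact_mod_cast h2
  refine irred_all q hq n hn.ne' f hf (by omega) ?_ ?_
  · rcases hconst with h | h <;> rw [h]
    · exact h1'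
    · exact (dvd_neg).2 h1'
  · rcases hconst with h | h <;> rw [h]
    · exact h2'
    · rwa [dvd_neg]
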